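/- arXiv:2302.05222 — 3 statements merged into one kernel-verified Lean document; each statement's English description precedes it below -/
import Mathlib

section
/- Let N be a nonempty finite set (the nodes of a cluster), let α : N → ℝ with 0 ≤ α n for all n, let P : N → ℝ with P n ≥ 0 for all n and P := ∑_{n ∈ N} P n > 0, and let p be a real number with 0 ≤ p ≤ (min_{n ∈ N} α n) · P. Then there exist nodal productions p_n ≥ 0 with ∑_{n ∈ N} p_n = p and p_n ≤ α n · P n for every n ∈ N; that is, any aggregated production feasible under the cluster-wide minimum availability can be disaggregated into nodally feasible productions. -/
/-- Any aggregated production feasible under the cluster-wide minimum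
availability can be disaggregated into nodally feasible productions. -/
theorem min_availability_disaggregation {ι : Type*} (N : Finset ι) (hN : N.Nonempty)
    (α P : ι → ℝ)
    (hα : ∀ n ∈ N, 0 ≤ α n) (hP : ∀ n ∈ N, 0 ≤ P n)
    (hPpos : 0 < ∑ n ∈ N, P n)
    (p : ℝ) (hp0 : 0 ≤ p) (hp : p ≤ (N.inf' hN α) * ∑ n ∈ N, P n) :
    ∃ q : ι → ℝ, (∀ n ∈ N, 0 ≤ q n) ∧ (∑ n ∈ N, q n = p) ∧
      (∀ n ∈ N, q n ≤ α n * P n) := by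
  refine ⟨fun n => p / (∑ m ∈ N, P m) * P n, ?_, ?_, ?_⟩
  · intro n hn
    exact mul_nonneg (div_nonneg hp0 hPpos.le) (hP n hn)
  · rw [← Finset.mul_sum]
    exact div_mul_cancel₀ p hPpos.ne'
  · intro n hn
    exact mul_le_mul_of_nonneg_right
      (((div_le_iff₀ hPpos).2 hp).trans (Finset.inf'_le α hn)) (hP n hn)
end

section
/- Let G be a connected finite simple graph on a nonempty vertex set V, and let b : V → ℝ with ∑_{v ∈ V} b v = 0. Then there exists an antisymmetric function f : V → V → ℝ with f u v = 0 whenever u and v are not adjacent in G, such that for every vertex v, ∑_{u ∈ V} f v u = b v, and for all u, v ∈ V, |f u v| ≤ ∑_{w ∈ V} max(b w, 0); that is, any balanced nodal demand/supply pattern can be routed over the edges of a connected graph with the flow on every edge bounded by the total positive demand. -/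
open Classical in
theorem path_flow_aux {V : Type*} [Fintype V] (G : SimpleGraph V) {s t : V}
    (p : G.Walk s t) (hp : p.IsPath) :
    ∃ g : V → V → ℝ,
      (∀ u v, g u v = - g v u) ∧
      (∀ u v, ¬ G.Adj u v → g u v = 0) ∧
      (∀ v, ∑ u, g v u = (if v = s then 1 else 0) - (if v = t then 1 else 0)) ∧
      (∀ u v, |g u v| ≤ 1) ∧ (∀ u v, u ∉ p.support → g u v = 0) := by
  induction p with
  | nil => exact ⟨fun _ _ => 0, by simp, by simp, by simp, by simp, by simp⟩
  | @cons x y z h p ih =>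
    rw [SimpleGraph.Walk.cons_isPath_iff] at hp
    obtain ⟨g, h1, h2, h3, h4, h5⟩ := ih hp.1
    have hx : ∀ v, g x v = 0 := fun v => h5 x v hp.2
    have hx' : ∀ v, g v x = 0 := fun v => by rw [h1, hx]; simp
    have hne : x ≠ y := h.ne
    refine ⟨fun a b => g a b + (if a = x then (if b = y then 1 else 0) else 0)
      - (if a = y then (if b = x then 1 else 0) else 0), ?_, ?_, ?_, ?_, ?_⟩
    · intro u v
      have := h1 u v
      simp only
      split_ifs <;> linarith
    · intro u v huv
      have := h2 u v huv
      have e1 : ¬ (u = x ∧ v = y) := by rintro ⟨rfl, rfl⟩; exact huv h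
      have e2 : ¬ (u = y ∧ v = x) := by rintro ⟨rfl, rfl⟩; exact huv h.symm
      simp only [← ite_and, if_neg e1, if_neg e2, this]
      simp
    · intro v
      rw [Finset.sum_sub_distrib, Finset.sum_add_distrib, h3]
      by_cases a : v = x <;> by_cases b : v = y <;> simp [a, b] <;> ring
    · intro u v
      have := h4 u v
      by_cases a : u = x
      · subst a
        simp only [hx, if_neg hne]
        split_ifs <;> simp
      · by_cases b : v = x
        · subst b
          simp only [hx', if_neg a]
          split_ifs <;> simp
        · simpa [a, b] using this
    · intro u v hu
      simp only [SimpleGraph.Walk.support_cons, List.mem_cons, not_or] at hu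
      have hy : u ≠ y := by rintro rfl; exact hu.2 p.start_mem_support
      simp [hu.1, hy, h5 u v hu.2]

/-- Any balanced nodal demand/supply pattern can be routed over the edges of a
connected graph with the flow on every edge bounded by the total positive
demand. -/
theorem balanced_flow_routing {V : Type*} [Fintype V] [Nonempty V]
    (G : SimpleGraph V) (hG : G.Connected)
    (b : V → ℝ) (hb : ∑ v, b v = 0) :
    ∃ f : V → V → ℝ,
      (∀ u v, f u v = - f v u) ∧
      (∀ u v, ¬ G.Adj u v → f u v = 0) ∧
      (∀ v, ∑ u, f v u = b v) ∧
      (∀ u v, |f u v| ≤ ∑ w, max (b w) 0) := by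
  classical
  have key : ∀ s t : V, ∃ g : V → V → ℝ,
      (∀ u v, g u v = - g v u) ∧
      (∀ u v, ¬ G.Adj u v → g u v = 0) ∧
      (∀ v, ∑ u, g v u = (if v = s then 1 else 0) - (if v = t then 1 else 0)) ∧
      (∀ u v, |g u v| ≤ 1) := by
    intro s t
    obtain ⟨p, hp⟩ := hG.exists_isPath s t
    obtain ⟨g, h1, h2, h3, h4, -⟩ := path_flow_aux G p hp
    exact ⟨g, h1, h2, fun v => by rw [h3], h4⟩
  choose g h1 h2 h3 h4 using key
  have hpm : ∀ v, max (b v) 0 - max (-b v) 0 = b v := fun v => by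
    rcases le_total (b v) 0 with h | h
    · rw [max_eq_right h, max_eq_left (by linarith)]; ring
    · rw [max_eq_left h, max_eq_right (by linarith)]; ring
  have hQ : ∑ w, max (-b w) 0 = ∑ w, max (b w) 0 := by
    have : ∑ w, (max (b w) 0 - max (-b w) 0) = 0 := by simp only [hpm, hb]
    rw [Finset.sum_sub_distrib] at this
    linarith
  have p0 : ∀ w, 0 ≤ max (b w) 0 := fun w => le_max_right _ _
  have q0 : ∀ w, 0 ≤ max (-b w) 0 := fun w => le_max_right _ _
  generalize hP : ∑ w, max (b w) 0 = P at *
  have hP0 : 0 ≤ P := hP ▸ Finset.sum_nonneg fun w _ => p0 w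
  generalize hp : (fun w => max (b w) 0) = p at *
  generalize hq : (fun w => max (-b w) 0) = q at *
  have ep : ∀ w, max (b w) 0 = p w := fun w => congrFun hp w
  have eq : ∀ w, max (-b w) 0 = q w := fun w => congrFun hq w
  simp only [ep, eq] at *
  clear hp hq
  rcases hP0.eq_or_lt with h0 | hpos
  · subst h0
    have a := (Finset.sum_eq_zero_iff_of_nonneg fun w _ => p0 w).1 hP
    have c := (Finset.sum_eq_zero_iff_of_nonneg fun w _ => q0 w).1 hQ
    refine ⟨fun _ _ => 0, by simp, by simp, fun v => ?_, by simp⟩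
    rw [← hpm, a v (Finset.mem_univ _), c v (Finset.mem_univ _)]; simp
  · refine ⟨fun u v => ∑ s, ∑ t, p s * q t / P * g s t u v, ?_, ?_, ?_, ?_⟩
    · intro u v
      simp only [← Finset.sum_neg_distrib]
      refine Finset.sum_congr rfl fun s _ => Finset.sum_congr rfl fun t _ => ?_
      rw [h1]; ring
    · intro u v huv
      simp [h2 _ _ u v huv]
    · intro v
      have : ∑ u, ∑ s, ∑ t, p s * q t / P * g s t v u
          = ∑ s, ∑ t, p s * q t / P * ((if v = s then 1 else 0) - (if v = t then 1 else 0)) := by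
        rw [Finset.sum_comm]
        refine Finset.sum_congr rfl fun s _ => ?_
        rw [Finset.sum_comm]
        refine Finset.sum_congr rfl fun t _ => ?_
        rw [← Finset.mul_sum, h3]
      rw [this]
      simp only [mul_sub, Finset.sum_sub_distrib]
      have e1 : ∑ s, ∑ t, p s * q t / P * (if v = s then (1:ℝ) else 0) = p v := by
        rw [Finset.sum_comm]
        simp only [mul_ite, mul_one, mul_zero, Finset.sum_ite_eq, Finset.mem_univ, if_true]
        rw [← Finset.sum_div, ← Finset.mul_sum, hQ]
        field_simp
      have e2 : ∑ s, ∑ t, p s * q t / P * (if v = t then (1:ℝ) else 0) = q v := by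
        simp only [mul_ite, mul_one, mul_zero, Finset.sum_ite_eq, Finset.mem_univ, if_true]
        rw [← Finset.sum_div, ← Finset.sum_mul, hP]
        field_simp
      rw [e1, e2, hpm]
    · intro u v
      have e : ∑ s, ∑ t, p s * q t / P = P := by
        simp only [← Finset.sum_div, ← Finset.mul_sum, ← Finset.sum_mul, hQ, hP]
        field_simp
      refine le_trans ?_ e.le
      refine (Finset.abs_sum_le_sum_abs _ _).trans (Finset.sum_le_sum fun s _ => ?_)
      refine (Finset.abs_sum_le_sum_abs _ _).trans (Finset.sum_le_sum fun t _ => ?_)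
      have hc : 0 ≤ p s * q t / P := div_nonneg (mul_nonneg (p0 s) (q0 t)) hpos.le
      rw [abs_mul, abs_of_nonneg hc]
      exact mul_le_of_le_one_right hc (h4 s t u v)
end

section
/- Let m be a natural number, k : Fin m → ℝ nondecreasing (k i ≤ k j whenever i ≤ j), q : Fin m → ℝ with q i ≥ 0 for all i, and D a real number with 0 ≤ D ≤ ∑_i q i. Define the merit-order dispatch x i = min (q i) (max 0 (D − ∑_{j < i} q j)). Then 0 ≤ x i ≤ q i for all i, ∑_i x i = D, and for every y : Fin m → ℝ with 0 ≤ y i ≤ q i for all i and ∑_i y i = D, one has ∑_i k i · x i ≤ ∑_i k i · y i; that is, dispatching capacities in order of increasing operating cost minimizes total operating cost among all feasible dispatches meeting the demand. -/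
theorem merit_sum (m : ℕ) (q : Fin m → ℝ) (hq : ∀ i, 0 ≤ q i) (D : ℝ) (hD0 : 0 ≤ D) :
    ∑ i, min (q i) (max 0 (D - ∑ j ∈ Finset.Iio i, q j)) = min D (∑ i, q i) := by
  induction m with
  | zero => simp [hD0]
  | succ n ih =>
    have h1 : ∀ i : Fin n, ∑ j ∈ Finset.Iio i.castSucc, q j
        = ∑ j ∈ Finset.Iio i, q j.castSucc := by
      intro i
      rw [← Fin.map_castSuccEmb_Iio, Finset.sum_map]
      rfl
    have h2 : ∑ j ∈ Finset.Iio (Fin.last n), q j = ∑ j : Fin n, q j.castSucc := by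
      rw [Fin.Iio_last_eq_map, Finset.sum_map]
      rfl
    rw [Fin.sum_univ_castSucc, Fin.sum_univ_castSucc (f := q), h2]
    simp only [h1]
    rw [ih (fun i => q i.castSucc) (fun i => hq _)]
    have := hq (Fin.last n)
    generalize ∑ j : Fin n, q j.castSucc = S
    generalize q (Fin.last n) = a at *
    grind

/-- Dispatching capacities in order of increasing operating cost minimizes
total operating cost among all feasible dispatches meeting the demand. -/
theorem merit_order_dispatch_optimal (m : ℕ) (k q : Fin m → ℝ)
    (hk : ∀ i j : Fin m, i ≤ j → k i ≤ k j)
    (hq : ∀ i, 0 ≤ q i)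
    (D : ℝ) (hD0 : 0 ≤ D) (hD : D ≤ ∑ i, q i) :
    let x : Fin m → ℝ := fun i => min (q i) (max 0 (D - ∑ j ∈ Finset.Iio i, q j))
    (∀ i, 0 ≤ x i ∧ x i ≤ q i) ∧ (∑ i, x i = D) ∧
      (∀ y : Fin m → ℝ, (∀ i, 0 ≤ y i ∧ y i ≤ q i) → ∑ i, y i = D →
        ∑ i, k i * x i ≤ ∑ i, k i * y i) := by
  intro x
  have hb : ∀ i, 0 ≤ x i ∧ x i ≤ q i := fun i =>
    ⟨le_min (hq i) (le_max_left _ _), min_le_left _ _⟩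
  have hs : ∑ i, x i = D := by
    rw [merit_sum m q hq D hD0, min_eq_left hD]
  refine ⟨hb, hs, fun y hy hys => ?_⟩
  by_cases h : ∃ p, x p < q p
  · obtain ⟨p, hp, hmin⟩ := WellFounded.has_min (wellFounded_lt (α := Fin m)) {p | x p < q p} h
    have hlt : ∀ i, i < p → x i = q i := fun i hi =>
      le_antisymm (hb i).2 (not_lt.1 fun h' => hmin i h' hi)
    have hgt : ∀ i, p < i → x i = 0 := by
      intro i hi
      have h1 : D - ∑ j ∈ Finset.Iio p, q j < q p := by
        by_contra hc
        push Not at hc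
        have : x p = q p := min_eq_left (hc.trans (le_max_right _ _))
        exact absurd this (ne_of_lt hp)
      have h2 : ∑ j ∈ Finset.Iio p, q j + q p ≤ ∑ j ∈ Finset.Iio i, q j := by
        rw [add_comm, ← Finset.sum_insert (by simp : p ∉ Finset.Iio p)]
        apply Finset.sum_le_sum_of_subset_of_nonneg
        · intro j hj
          simp only [Finset.mem_insert, Finset.mem_Iio] at hj ⊢
          rcases hj with rfl | hj
          · exact hi
          · exact hj.trans hi
        · intros
          exact hq _
      have h3 : max 0 (D - ∑ j ∈ Finset.Iio i, q j) = 0 := max_eq_left (by linarith)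
      change min (q i) (max 0 (D - ∑ j ∈ Finset.Iio i, q j)) = 0
      rw [h3]
      exact min_eq_right (hq i)
    have hterm : ∀ i, (k i - k p) * (x i - y i) ≤ 0 := by
      intro i
      rcases lt_trichotomy i p with hi | hi | hi
      · have := hk i p hi.le
        have := hlt i hi
        have := (hy i).2
        exact mul_nonpos_of_nonpos_of_nonneg (by linarith) (by linarith)
      · simp [hi]
      · have := hk p i hi.le
        have := hgt i hi
        have := (hy i).1
        exact mul_nonpos_of_nonneg_of_nonpos (by linarith) (by linarith)
    have hsum := Finset.sum_nonpos (fun i (_ : i ∈ Finset.univ) => hterm i)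
    have he : ∑ i, (k i - k p) * (x i - y i)
        = ∑ i, k i * x i - ∑ i, k i * y i - k p * (∑ i, x i - ∑ i, y i) := by
      rw [← Finset.sum_sub_distrib, ← Finset.sum_sub_distrib, Finset.mul_sum,
        ← Finset.sum_sub_distrib]
      exact Finset.sum_congr rfl fun i _ => by ring
    rw [he, hs, hys] at hsum
    linarith
  · push Not at h
    have hle : ∀ i ∈ Finset.univ, y i ≤ x i := fun i _ => (hy i).2.trans (h i)
    have heq := (Finset.sum_eq_sum_iff_of_le hle).1 (hys.trans hs.symm)
    exact le_of_eq (Finset.sum_congr rfl fun i hi => by rw [heq i hi])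
end
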